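/- Let α, β ≥ 1 be real numbers. There exist constants C_β > 0 (depending only on β) and C_{α,β} > 0 (depending only on α and β) with the following property. For all ℓ₁ ≥ ℓ₂ ≥ ℓ₃ > 0, every integer M ≥ 0, and every configuration (x₁, …, x_M) ∈ (ℝ³)^M, one has ∑_{r ∈ ℓ₂ℤ³} (M_r^{(ℓ₁)})^α · 1(M_r^{(ℓ₁)} ≥ C_β (ℓ₁/ℓ₃)³) ≤ C_{α,β} (ℓ₁/ℓ₂)³ (ℓ₁/ℓ₃)^{3(α−1)} ∑_{s ∈ ℓ₃ℤ³} (M_s^{(ℓ₃)})^α · 1(M_s^{(ℓ₃)} ≥ β). (All but finitely many terms of each sum vanish.) -/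

import Mathlib

noncomputable section

local notation "E3" => EuclideanSpace ℝ (Fin 3)

/-- The number of points of the configuration `x` lying in the half-open cube of side
length `ℓ` centred at the point with coordinates `c`. -/
def boxCount {M : ℕ} (x : Fin M → E3) (c : Fin 3 → ℝ) (ℓ : ℝ) : ℕ :=
  Set.ncard {i : Fin M | ∀ d : Fin 3, -(ℓ / 2) ≤ x i d - c d ∧ x i d - c d < ℓ / 2}

/-- An interval of radius `L ≥ a` contains at most `3 * (L / a)` points of the lattice `aℤ`. -/
lemma card_Icc_ceil_floor_le {a L : ℝ} (ha : 0 < a) (haL : a ≤ L) (c : ℝ) :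
    ((Finset.Icc ⌈(c - L) / a⌉ ⌊(c + L) / a⌋).card : ℝ) ≤ 3 * (L / a) := by
  have hLa : 1 ≤ L / a := (one_le_div ha).2 haL
  have hsub : (c - L) / a = c / a - L / a := sub_div _ _ _
  have hadd : (c + L) / a = c / a + L / a := add_div _ _ _
  have hceil := Int.le_ceil ((c - L) / a)
  have hfloor := Int.floor_le ((c + L) / a)
  rw [Int.card_Icc]
  rcases le_total 0 (⌊(c + L) / a⌋ + 1 - ⌈(c - L) / a⌉) with h | h
  · have hcast : (((⌊(c + L) / a⌋ + 1 - ⌈(c - L) / a⌉).toNat : ℤ) : ℝ) =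
        ((⌊(c + L) / a⌋ + 1 - ⌈(c - L) / a⌉ : ℤ) : ℝ) := by
      rw [Int.toNat_of_nonneg h]
    rw [Int.cast_natCast] at hcast
    rw [hcast]
    push_cast
    linarith
  · rw [Int.toNat_of_nonpos h]
    push_cast
    linarith

/-- A cube of half-side `L ≥ a` contains at most `27 * (L / a) ^ 3` points of `aℤ³`. -/
lemma card_lattice_cube_le {a L : ℝ} (ha : 0 < a) (haL : a ≤ L) (c : Fin 3 → ℝ)
    (A : Finset (Fin 3 → ℤ)) (hA : ∀ v ∈ A, ∀ d, |a * v d - c d| ≤ L) :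
    (A.card : ℝ) ≤ 27 * (L / a) ^ 3 := by
  have hsub : A ⊆ Fintype.piFinset
      (fun d => Finset.Icc ⌈(c d - L) / a⌉ ⌊(c d + L) / a⌋) := by
    intro v hv
    rw [Fintype.mem_piFinset]
    intro d
    have h := abs_le.1 (hA v hv d)
    rw [Finset.mem_Icc, Int.ceil_le, Int.le_floor, div_le_iff₀ ha, le_div_iff₀ ha]
    constructor <;> linarith [h.1, h.2, mul_comm a (v d : ℝ)]
  calc (A.card : ℝ)
      ≤ ∏ d, ((Finset.Icc ⌈(c d - L) / a⌉ ⌊(c d + L) / a⌋).card : ℝ) := by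
        have h := Finset.card_le_card hsub
        rw [Fintype.card_piFinset] at h
        exact_mod_cast h
    _ ≤ ∏ _d : Fin 3, 3 * (L / a) :=
        Finset.prod_le_prod (fun _ _ => by positivity)
          fun d _ => card_Icc_ceil_floor_le ha haL (c d)
    _ = 27 * (L / a) ^ 3 := by
        rw [Finset.prod_const, Finset.card_univ, Fintype.card_fin]
        ring

/-- The index of the cell of the tiling of `ℝ³` by half-open cubes centred at `ℓℤ³`
that contains `p`. -/
def cellIndex (ℓ : ℝ) (p : E3) (d : Fin 3) : ℤ := ⌊p d / ℓ + 1 / 2⌋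

lemma cellIndex_eq_iff {ℓ : ℝ} (hℓ : 0 < ℓ) (p : E3) (s : Fin 3 → ℤ) :
    cellIndex ℓ p = s ↔
      ∀ d, -(ℓ / 2) ≤ p d - ℓ * s d ∧ p d - ℓ * s d < ℓ / 2 := by
  rw [funext_iff]
  refine forall_congr' fun d => ?_
  have hp : p d = ℓ * (p d / ℓ) := by field_simp
  rw [cellIndex, Int.floor_eq_iff]
  generalize p d / ℓ = t at hp
  rw [hp]
  constructor
  · rintro ⟨h₁, h₂⟩
    constructor <;> nlinarith
  · rintro ⟨h₁, h₂⟩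
    constructor
    · by_contra! h
      nlinarith
    · by_contra! h
      nlinarith

lemma boxCount_cell {ℓ : ℝ} (hℓ : 0 < ℓ) {M : ℕ} (x : Fin M → E3) (s : Fin 3 → ℤ) :
    boxCount x (fun d => ℓ * s d) ℓ =
      (Finset.univ.filter fun i => cellIndex ℓ (x i) = s).card := by
  rw [boxCount, ← Set.ncard_coe_finset]
  congr 1
  ext i
  simp [cellIndex_eq_iff hℓ]

open Classical in
/-- The count in a box of side `L ≥ ℓ` is at most the total count in the occupied cells of
side `ℓ` whose centres are within `L` of the centre of the box. -/
lemma boxCount_le_sum_cells {ℓ L : ℝ} (hℓ : 0 < ℓ) (hℓL : ℓ ≤ L) {M : ℕ}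
    (x : Fin M → E3) (c : Fin 3 → ℝ) :
    boxCount x c L ≤
      ∑ s ∈ (Finset.univ.image fun i => cellIndex ℓ (x i)).filter
        (fun s => ∀ d, |ℓ * s d - c d| ≤ L), boxCount x (fun d => ℓ * s d) ℓ := by
  have hcount : boxCount x c L = (Finset.univ.filter fun i : Fin M =>
      ∀ d, -(L / 2) ≤ x i d - c d ∧ x i d - c d < L / 2).card := by
    rw [boxCount, ← Set.ncard_coe_finset]
    simp
  rw [hcount, Finset.card_eq_sum_card_fiberwise (f := fun i => cellIndex ℓ (x i))
    (t := (Finset.univ.image fun i => cellIndex ℓ (x i)).filter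
        (fun s => ∀ d, |ℓ * s d - c d| ≤ L))]
  · refine Finset.sum_le_sum fun s _ => ?_
    rw [boxCount_cell hℓ]
    refine Finset.card_le_card fun i hi => ?_
    simp only [Finset.mem_filter, Finset.mem_univ, true_and] at hi ⊢
    exact hi.2
  · intro i hi
    simp only [Finset.coe_filter, Finset.mem_univ, true_and, Set.mem_ofPred_eq] at hi
    simp only [Finset.coe_filter, Set.mem_ofPred_eq, Finset.mem_image, Finset.mem_univ, true_and]
    refine ⟨⟨i, rfl⟩, fun d => ?_⟩
    have h := (cellIndex_eq_iff hℓ (x i) _).1 rfl d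
    rw [abs_le]
    constructor <;> linarith [h.1, h.2, (hi d).1, (hi d).2]

/-- If at most `K` nonnegative numbers have a sum of at least `2 * β * K`, the numbers
that are at least `β` carry half of that sum, and the power mean inequality applies to them. -/
lemma rpow_le_sum_rpow_large {ι : Type*} (S : Finset ι) (N : ι → ℝ) (hN : ∀ s, 0 ≤ N s)
    {α β K m : ℝ} (hα : 1 ≤ α) (hβ : 0 ≤ β) (hK : (S.card : ℝ) ≤ K) (hm₀ : 0 ≤ m)
    (hm : m ≤ ∑ s ∈ S, N s) (hlarge : 2 * β * K ≤ m) :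
    m ^ α ≤ 2 ^ α * K ^ (α - 1) * ∑ s ∈ S, N s ^ α * (if β ≤ N s then 1 else 0) := by
  have hα₀ : 0 ≤ α := by linarith
  have hhalf : m ≤ 2 * ∑ s ∈ S, N s * (if β ≤ N s then 1 else 0) := by
    have hsplit : ∑ s ∈ S, N s ≤ S.card * β + ∑ s ∈ S, N s * (if β ≤ N s then 1 else 0) := by
      rw [← nsmul_eq_mul, ← Finset.sum_const, ← Finset.sum_add_distrib]
      refine Finset.sum_le_sum fun s _ => ?_
      split_ifs with h <;> linarith
    nlinarith [mul_le_mul_of_nonneg_right hK hβ]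
  have hterm : ∀ s, 0 ≤ N s * (if β ≤ N s then 1 else 0) := fun s =>
    mul_nonneg (hN s) (by split_ifs <;> norm_num)
  have hpow : ∀ s, (N s * (if β ≤ N s then 1 else 0)) ^ α =
      N s ^ α * (if β ≤ N s then 1 else 0) := by
    intro s
    split_ifs
    · simp
    · simp [Real.zero_rpow (by linarith : α ≠ 0)]
  calc m ^ α ≤ (2 * ∑ s ∈ S, N s * (if β ≤ N s then 1 else 0)) ^ α :=
        Real.rpow_le_rpow hm₀ hhalf hα₀
    _ = 2 ^ α * (∑ s ∈ S, N s * (if β ≤ N s then 1 else 0)) ^ α :=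
        Real.mul_rpow (by norm_num) (Finset.sum_nonneg fun s _ => hterm s)
    _ ≤ 2 ^ α * ((S.card : ℝ) ^ (α - 1) *
          ∑ s ∈ S, (N s * (if β ≤ N s then 1 else 0)) ^ α) := by
        gcongr
        exact Real.rpow_sum_le_const_mul_sum_rpow_of_nonneg S hα fun s _ => hterm s
    _ ≤ 2 ^ α * (K ^ (α - 1) * ∑ s ∈ S, (N s * (if β ≤ N s then 1 else 0)) ^ α) := by
        have h₁ : (S.card : ℝ) ^ (α - 1) ≤ K ^ (α - 1) :=
          Real.rpow_le_rpow (by positivity) hK (by linarith)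
        have h₂ : 0 ≤ ∑ s ∈ S, (N s * (if β ≤ N s then 1 else 0)) ^ α :=
          Finset.sum_nonneg fun s _ => Real.rpow_nonneg (hterm s) α
        gcongr
    _ = 2 ^ α * K ^ (α - 1) * ∑ s ∈ S, N s ^ α * (if β ≤ N s then 1 else 0) := by
        simp only [hpow, mul_assoc]

/-- Convexity estimate comparing `α`-th moments of box occupation numbers at scale
`ℓ₁` (boxes centred on the lattice `ℓ₂ℤ³`) with those at the finer scale `ℓ₃`,
restricted to densely occupied boxes. -/
theorem convexity_estimate_boxes (β : ℝ) (hβ : 1 ≤ β) :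
    ∃ Cβ > 0, ∀ α : ℝ, 1 ≤ α → ∃ Cαβ > 0,
      ∀ ℓ₁ ℓ₂ ℓ₃ : ℝ, 0 < ℓ₃ → ℓ₃ ≤ ℓ₂ → ℓ₂ ≤ ℓ₁ →
      ∀ (M : ℕ) (x : Fin M → E3),
      (∑' v : Fin 3 → ℤ,
          (boxCount x (fun d => ℓ₂ * v d) ℓ₁ : ℝ) ^ α *
            (if Cβ * (ℓ₁ / ℓ₃) ^ 3 ≤ (boxCount x (fun d => ℓ₂ * v d) ℓ₁ : ℝ)
              then 1 else 0))
      ≤ Cαβ * (ℓ₁ / ℓ₂) ^ 3 * (ℓ₁ / ℓ₃) ^ (3 * (α - 1)) *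
          ∑' s : Fin 3 → ℤ,
            (boxCount x (fun d => ℓ₃ * s d) ℓ₃ : ℝ) ^ α *
              (if β ≤ (boxCount x (fun d => ℓ₃ * s d) ℓ₃ : ℝ) then 1 else 0) := by
  classical
  refine ⟨54 * β, by linarith, fun α hα => ⟨2 ^ α * 27 ^ (α - 1) * 27, by positivity, ?_⟩⟩
  intro ℓ₁ ℓ₂ ℓ₃ hℓ₃ hℓ₃₂ hℓ₂₁ M x
  have hℓ₂ : 0 < ℓ₂ := hℓ₃.trans_le hℓ₃₂
  have hℓ₁ : 0 < ℓ₁ := hℓ₂.trans_le hℓ₂₁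
  set T : Finset (Fin 3 → ℤ) := Finset.univ.image fun i => cellIndex ℓ₃ (x i)
  set N : (Fin 3 → ℤ) → ℝ := fun s => (boxCount x (fun d => ℓ₃ * s d) ℓ₃ : ℝ) with hN
  set f : (Fin 3 → ℤ) → ℝ := fun s => N s ^ α * (if β ≤ N s then 1 else 0) with hf
  have hN₀ : ∀ s, 0 ≤ N s := fun s => Nat.cast_nonneg _
  have hf₀ : ∀ s, 0 ≤ f s := fun s =>
    mul_nonneg (Real.rpow_nonneg (hN₀ s) α) (by split_ifs <;> norm_num)
  have hsupp : ∀ s ∉ T, f s = 0 := by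
    intro s hs
    have hempty : N s = 0 := by
      simp only [hN, boxCount_cell hℓ₃, Nat.cast_eq_zero, Finset.card_eq_zero]
      refine Finset.filter_eq_empty_iff.2 fun i _ h => hs ?_
      exact Finset.mem_image.2 ⟨i, Finset.mem_univ i, h⟩
    simp only [hf, hempty]
    rw [Real.zero_rpow (by linarith), zero_mul]
  rw [tsum_eq_sum (L := SummationFilter.unconditional _) (s := T) (fun s hs => hsupp s hs)]
  set near : (Fin 3 → ℤ) → (Fin 3 → ℤ) → Prop :=
    fun v s => ∀ d, |ℓ₃ * s d - ℓ₂ * v d| ≤ ℓ₁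
  set D : ℝ := 2 ^ α * (27 * (ℓ₁ / ℓ₃) ^ 3) ^ (α - 1) with hD
  have hD₀ : 0 ≤ D := by positivity
  have hbox : ∀ v : Fin 3 → ℤ, (boxCount x (fun d => ℓ₂ * v d) ℓ₁ : ℝ) ^ α *
      (if 54 * β * (ℓ₁ / ℓ₃) ^ 3 ≤ (boxCount x (fun d => ℓ₂ * v d) ℓ₁ : ℝ) then 1 else 0) ≤
      D * ∑ s ∈ T, if near v s then f s else 0 := by
    intro v
    rw [← Finset.sum_filter]
    split_ifs with h
    · rw [mul_one]
      refine rpow_le_sum_rpow_large (T.filter (near v)) N hN₀ hα (by linarith) ?_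
        (Nat.cast_nonneg _) ?_ (by linarith)
      · exact card_lattice_cube_le hℓ₃ (hℓ₃₂.trans hℓ₂₁) (fun d => ℓ₂ * v d) _
          fun s hs => (Finset.mem_filter.1 hs).2
      · simp only [hN]
        exact_mod_cast boxCount_le_sum_cells hℓ₃ (hℓ₃₂.trans hℓ₂₁) x (fun d => ℓ₂ * v d)
    · rw [mul_zero]
      exact mul_nonneg hD₀ (Finset.sum_nonneg fun s _ => hf₀ s)
  have hconst : D * (27 * (ℓ₁ / ℓ₂) ^ 3) =
      2 ^ α * 27 ^ (α - 1) * 27 * (ℓ₁ / ℓ₂) ^ 3 * (ℓ₁ / ℓ₃) ^ (3 * (α - 1)) := by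
    rw [hD, Real.mul_rpow (by norm_num) (by positivity), Real.rpow_mul (by positivity)]
    norm_cast
    ring
  rw [← hconst]
  refine tsum_le_of_sum_le' (mul_nonneg (by positivity)
    (Finset.sum_nonneg fun s _ => hf₀ s)) fun u => ?_
  calc _ ≤ ∑ v ∈ u, D * ∑ s ∈ T, (if near v s then f s else 0) :=
        Finset.sum_le_sum fun v _ => hbox v
    _ = D * ∑ s ∈ T, (u.filter fun v => near v s).card * f s := by
        rw [← Finset.mul_sum, Finset.sum_comm]
        congr 1
        refine Finset.sum_congr rfl fun s _ => ?_
        rw [← Finset.sum_filter, Finset.sum_const, nsmul_eq_mul]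
    _ ≤ D * ∑ s ∈ T, 27 * (ℓ₁ / ℓ₂) ^ 3 * f s := by
        refine mul_le_mul_of_nonneg_left (Finset.sum_le_sum fun s _ =>
          mul_le_mul_of_nonneg_right ?_ (hf₀ s)) hD₀
        refine card_lattice_cube_le hℓ₂ hℓ₂₁ (fun d => ℓ₃ * s d) _ fun v hv d => ?_
        rw [abs_sub_comm]
        exact (Finset.mem_filter.1 hv).2 d
    _ = D * (27 * (ℓ₁ / ℓ₂) ^ 3) * ∑ s ∈ T, f s := by
        rw [← Finset.mul_sum, ← mul_assoc]
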